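/- Let U ⊆ ℂ be an open connected set containing 0, let σ : U → ℂ be holomorphic with σ(0) = 0 and σ'(z) ≠ 0 for every z ∈ U, let (m,n) be a pair of integers with (m,n) ≠ (0,0), and let c ∈ ℂ. If σ'(z)^m · conj(σ'(z))^n = c for all z ∈ U, then σ(z) = σ'(0)·z for all z ∈ U. -/

import Mathlib

open Complex

/-- If `w ↦ w ^ m * conj w ^ n` is locally constant at a nonzero point, then the real-linear map
`v ↦ m * v + n * conj v` (its logarithmic derivative) vanishes. -/
lemma logDeriv_zpow_mul_conj_zpow_eq_zero {w₀ c : ℂ} (hw₀ : w₀ ≠ 0) {m n : ℤ}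
    (h : ∀ᶠ w in nhds w₀, w ^ m * (starRingEnd ℂ w) ^ n = c) (v : ℂ) :
    (m : ℂ) * v + n * starRingEnd ℂ v = 0 := by
  have hconj₀ : starRingEnd ℂ w₀ ≠ 0 := by simpa using hw₀
  have hpath : Filter.Tendsto (fun s : ℝ => w₀ * exp (s * v)) (nhds 0) (nhds w₀) := by
    have hcont : Continuous fun s : ℝ => w₀ * exp (s * v) := by fun_prop
    simpa using hcont.tendsto 0
  have hc : w₀ ^ m * (starRingEnd ℂ w₀) ^ n = c := h.self_of_nhds
  have hone : ∀ᶠ s : ℝ in nhds 0, exp (s * (m * v + n * starRingEnd ℂ v)) = 1 := by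
    filter_upwards [hpath.eventually h] with s hs
    have hexp : exp (s * (m * v + n * starRingEnd ℂ v)) =
        exp (s * v) ^ m * (starRingEnd ℂ (exp (s * v))) ^ n := by
      rw [← exp_conj, ← exp_int_mul, ← exp_int_mul, ← exp_add]
      simp only [map_mul, conj_ofReal]
      ring_nf
    rw [hexp]
    rw [map_mul, mul_zpow, mul_zpow, ← hc] at hs
    have hc₀ : w₀ ^ m * (starRingEnd ℂ w₀) ^ n ≠ 0 :=
      mul_ne_zero (zpow_ne_zero _ hw₀) (zpow_ne_zero _ hconj₀)
    apply mul_left_cancel₀ hc₀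
    linear_combination hs
  have hderiv : HasDerivAt (fun s : ℝ => exp (s * (m * v + n * starRingEnd ℂ v)))
      (m * v + n * starRingEnd ℂ v) 0 := by
    simpa using ((ofRealCLM.hasDerivAt (x := 0)).mul_const (m * v + n * starRingEnd ℂ v)).cexp
  exact hderiv.unique ((hasDerivAt_const (0 : ℝ) (1 : ℂ)).congr_of_eventuallyEq hone)

/-- The function `w ↦ w ^ m * conj w ^ n` is locally constant at a nonzero point only if
`m = n = 0`. -/
lemma eq_zero_of_eventually_zpow_mul_conj_zpow_eq {w₀ c : ℂ} (hw₀ : w₀ ≠ 0) {m n : ℤ}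
    (h : ∀ᶠ w in nhds w₀, w ^ m * (starRingEnd ℂ w) ^ n = c) : m = 0 ∧ n = 0 := by
  have hadd : m + n = 0 := by
    have := logDeriv_zpow_mul_conj_zpow_eq_zero hw₀ h 1
    simp only [map_one, mul_one] at this
    exact_mod_cast this
  have hsub : m - n = 0 := by
    have := logDeriv_zpow_mul_conj_zpow_eq_zero hw₀ h I
    rw [conj_I] at this
    have : ((m : ℂ) - n) * I = 0 := by linear_combination this
    exact_mod_cast (mul_eq_zero.mp this).resolve_right I_ne_zero
  lia

/-- A holomorphic map fixing `0` on an open connected neighborhood of `0` that preserves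
the constant `(m,n)`-differential `dz^m dz̄^n` up to a multiplicative constant is the
linear map `z ↦ σ'(0) z`. -/
theorem linear_of_preserves_constant_differential
    (U : Set ℂ) (hUo : IsOpen U) (hUc : IsConnected U) (h0 : (0 : ℂ) ∈ U)
    (σ : ℂ → ℂ) (hσ : DifferentiableOn ℂ σ U) (hσ0 : σ 0 = 0)
    (hσ' : ∀ z ∈ U, deriv σ z ≠ 0)
    (m n : ℤ) (hmn : (m, n) ≠ (0, 0)) (c : ℂ)
    (hinv : ∀ z ∈ U, (deriv σ z) ^ m * (starRingEnd ℂ (deriv σ z)) ^ n = c) :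
    ∀ z ∈ U, σ z = deriv σ 0 * z := by
  have hconst : ∀ z ∈ U, deriv σ z = deriv σ 0 := by
    rcases ((hσ.deriv hUo).analyticOnNhd hUo).is_constant_or_isOpen hUc.isPreconnected with
      ⟨w, hw⟩ | hopen
    · exact fun z hz => (hw z hz).trans (hw 0 h0).symm
    · have himage : deriv σ '' U ∈ nhds (deriv σ 0) :=
        (hopen U subset_rfl hUo).mem_nhds (Set.mem_image_of_mem _ h0)
      obtain ⟨rfl, rfl⟩ := eq_zero_of_eventually_zpow_mul_conj_zpow_eq (hσ' 0 h0)
        (Filter.mem_of_superset himage (Set.image_subset_iff.mpr hinv))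
      exact absurd rfl hmn
  refine hUo.eqOn_of_deriv_eq hUc.isPreconnected hσ (by fun_prop) (fun z hz => ?_) h0
    (by simp [hσ0])
  simpa using hconst z hz
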